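/- arXiv:2307.04102 — 6 statements merged into one kernel-verified Lean document; each statement's English description precedes it below -/
import Mathlib

section
/- Let λ > 0 and let F₁,…,F_p : ℝⁿ → ℝ (ℝⁿ = ℝᵐ × ℝᵈ) be twice continuously differentiable with ‖∇F_j(z)‖ ≤ L and ‖∇²F_j(z)‖ ≤ M for all z and j, and for β ∈ ℝᵖ set φ_β = Σ_{j=1}^p β_j F_j. Then for every fixed z' ∈ ℝⁿ, the function β ↦ φ_β^c(z') is differentiable at β = 0, and its partial derivative with respect to β_j at β = 0 equals −F_j(z'). -/
/-!
Testing the infimum at `z = z'` gives `φ_β^c(z') ≤ -φ_β(z')`. Conversely, with `a = min(λ,1)/2` the cost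
dominates `a‖z - z'‖²`, and `φ_β` is Lipschitz with constant `K = L ∑ |β_j| ≤ L p ‖β‖`; minimizing
`a r² - K r` over `r` gives `φ_β^c(z') ≥ -φ_β(z') - K²/(4a)`. Hence `φ_β^c(z')` differs from the linear
function `β ↦ -∑ β_j F_j(z')` by `O(‖β‖²)`, which identifies its derivative at `0`.
-/

open scoped RealInnerProductSpace
open MeasureTheory

noncomputable section

/-- The product space `ℝᵐ × ℝᵈ` whose points are written `z = (y, x)`. -/
abbrev Zsp (m d : ℕ) := EuclideanSpace ℝ (Fin m) × EuclideanSpace ℝ (Fin d)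

/-- Weighted quadratic cost `c_λ(z,z') = (1/2)(λ‖y−y'‖² + ‖x−x'‖²)`. -/
noncomputable def cost (lam : ℝ) {m d : ℕ} (z z' : Zsp m d) : ℝ :=
  (lam * ‖z.1 - z'.1‖ ^ 2 + ‖z.2 - z'.2‖ ^ 2) / 2

/-- The `c`-transform `φ^c(z') = inf_z (c_λ(z,z') − φ(z))`. -/
noncomputable def ctrans (lam : ℝ) {m d : ℕ} (φ : Zsp m d → ℝ) (z' : Zsp m d) : ℝ :=
  ⨅ z : Zsp m d, (cost lam z z' - φ z)

/-- Partial gradient in the `y` variable. -/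
noncomputable def gradY {m d : ℕ} (F : Zsp m d → ℝ) (z : Zsp m d) :
    EuclideanSpace ℝ (Fin m) :=
  gradient (fun y => F (y, z.2)) z.1

/-- Partial gradient in the `x` variable. -/
noncomputable def gradX {m d : ℕ} (F : Zsp m d → ℝ) (z : Zsp m d) :
    EuclideanSpace ℝ (Fin d) :=
  gradient (fun x => F (z.1, x)) z.2

/-- Rescaled gradient `∇_λF(z) = (∇_yF(z)/λ, ∇_xF(z))`. -/
noncomputable def gradLam (lam : ℝ) {m d : ℕ} (F : Zsp m d → ℝ) (z : Zsp m d) : Zsp m d :=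
  (lam⁻¹ • gradY F z, gradX F z)

/-- `⟨∇F(z), ∇_λG(z)⟩ = ⟨∇_yF(z), ∇_yG(z)⟩/λ + ⟨∇_xF(z), ∇_xG(z)⟩`. -/
noncomputable def innerLam (lam : ℝ) {m d : ℕ} (F G : Zsp m d → ℝ) (z : Zsp m d) : ℝ :=
  ⟪gradY F z, gradY G z⟫ / lam + ⟪gradX F z, gradX G z⟫

lemma cost_self (lam : ℝ) {m d : ℕ} (z' : Zsp m d) : cost lam z' z' = 0 := by
  simp [cost]

/-- The weighted cost is coercive for the sup norm carried by the product `Zsp m d`. -/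
lemma mul_norm_sq_le_cost {lam : ℝ} (hlam : 0 < lam) {m d : ℕ} (z z' : Zsp m d) :
    min lam 1 / 2 * ‖z - z'‖ ^ 2 ≤ cost lam z z' := by
  have h1 : min lam 1 ≤ lam := min_le_left _ _
  have h2 : min lam 1 ≤ 1 := min_le_right _ _
  have hsq1 := sq_nonneg ‖z.1 - z'.1‖
  have hsq2 := sq_nonneg ‖z.2 - z'.2‖
  have hmax : ‖z - z'‖ = max ‖z.1 - z'.1‖ ‖z.2 - z'.2‖ := rfl
  unfold cost
  rcases max_choice ‖z.1 - z'.1‖ ‖z.2 - z'.2‖ with h | h <;> rw [hmax, h]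
  · nlinarith [mul_le_mul_of_nonneg_right h1 hsq1]
  · nlinarith [mul_le_mul_of_nonneg_right h2 hsq2, mul_nonneg hlam.le hsq1]

/-- A potential with linear growth `K` around `z'` has `c`-transform at `z'` within `K²/(4a)` of `-φ(z')`,
where `a = min(λ,1)/2` is the coercivity constant of the cost. -/
lemma abs_ctrans_add_le {lam : ℝ} (hlam : 0 < lam) {m d : ℕ} (φ : Zsp m d → ℝ) (z' : Zsp m d)
    (K : ℝ) (hK : ∀ z, |φ z - φ z'| ≤ K * ‖z - z'‖) :
    |ctrans lam φ z' + φ z'| ≤ K ^ 2 / (4 * (min lam 1 / 2)) := by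
  have ha : 0 < min lam 1 / 2 := by positivity
  have hlow : ∀ z, -φ z' - K ^ 2 / (4 * (min lam 1 / 2)) ≤ cost lam z z' - φ z := by
    intro z
    have h1 := mul_norm_sq_le_cost hlam z z'
    have h2 := (abs_le.mp (hK z)).2
    generalize min lam 1 / 2 = a at *
    generalize ‖z - z'‖ = r at *
    have h3 : K * r - a * r ^ 2 ≤ K ^ 2 / (4 * a) := by
      rw [le_div_iff₀ (by positivity)]
      nlinarith [sq_nonneg (K - 2 * a * r)]
    linarith
  have hle : ctrans lam φ z' ≤ -φ z' := by
    have h := ciInf_le (f := fun z => cost lam z z' - φ z)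
      ⟨_, by rintro _ ⟨z, rfl⟩; exact hlow z⟩ z'
    simpa [ctrans, cost_self] using h
  have hge : -φ z' - K ^ 2 / (4 * (min lam 1 / 2)) ≤ ctrans lam φ z' := le_ciInf hlow
  have : 0 ≤ K ^ 2 / (4 * (min lam 1 / 2)) := by positivity
  rw [abs_le]
  constructor <;> linarith

/-- The linear combination `φ_β` is Lipschitz around `z'` with constant `p L ‖β‖`. -/
lemma abs_sum_sub_sum_le {m d p : ℕ} {L : ℝ} (F : Fin p → Zsp m d → ℝ)
    (hF : ∀ j, Differentiable ℝ (F j)) (hL : ∀ j z, ‖fderiv ℝ (F j) z‖ ≤ L)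
    (β : EuclideanSpace ℝ (Fin p)) (z z' : Zsp m d) :
    |∑ j, β j * F j z - ∑ j, β j * F j z'| ≤ p * L * ‖β‖ * ‖z - z'‖ := by
  rw [← Finset.sum_sub_distrib]
  calc _ ≤ ∑ j, |β j * F j z - β j * F j z'| := Finset.abs_sum_le_sum_abs _ _
    _ ≤ ∑ _j : Fin p, ‖β‖ * (L * ‖z - z'‖) := by
        refine Finset.sum_le_sum fun j _ => ?_
        rw [← mul_sub, abs_mul]
        refine mul_le_mul (PiLp.norm_apply_le β j) ?_ (abs_nonneg _) (norm_nonneg _)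
        exact convex_univ.norm_image_sub_le_of_norm_fderiv_le
          (fun x _ => (hF j).differentiableAt) (fun x _ => hL j x) (Set.mem_univ z') (Set.mem_univ z)
    _ = _ := by simp; ring

lemma hasFDerivAt_ctrans {m d p : ℕ} {lam L : ℝ} (hlam : 0 < lam) (F : Fin p → Zsp m d → ℝ)
    (hF : ∀ j, Differentiable ℝ (F j)) (hL : ∀ j z, ‖fderiv ℝ (F j) z‖ ≤ L) (z' : Zsp m d) :
    HasFDerivAt (fun β : EuclideanSpace ℝ (Fin p) => ctrans lam (fun z => ∑ j, β j * F j z) z')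
      (-∑ j, F j z' • (EuclideanSpace.proj j : EuclideanSpace ℝ (Fin p) →L[ℝ] ℝ)) 0 := by
  set l : EuclideanSpace ℝ (Fin p) →L[ℝ] ℝ := ∑ j, F j z' • EuclideanSpace.proj j with hl
  have hlβ : ∀ β, l β = ∑ j, β j * F j z' := by
    intro β
    simp [hl, mul_comm]
  have hO : (fun β : EuclideanSpace ℝ (Fin p) =>
      ctrans lam (fun z => ∑ j, β j * F j z) z' + l β) =O[nhds 0] fun β => ‖β - 0‖ ^ 2 := by
    refine Asymptotics.IsBigO.of_bound ((p * L) ^ 2 / (4 * (min lam 1 / 2))) (.of_forall fun β => ?_)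
    have h := abs_ctrans_add_le hlam (fun z => ∑ j, β j * F j z) z' (p * L * ‖β‖)
      fun z => abs_sum_sub_sum_le F hF hL β z z'
    rw [hlβ, sub_zero, Real.norm_eq_abs, norm_pow, norm_norm]
    refine h.trans_eq ?_
    ring
  have h := (hO.hasFDerivAt one_lt_two).sub l.hasFDerivAt
  rw [zero_sub] at h
  refine h.congr_of_eventuallyEq (.of_forall fun β => ?_)
  simp

/-- for fixed `z'`, the map `β ↦ φ_β^c(z')` is differentiable at `β = 0`
with partial derivative `∂/∂β_j = −F_j(z')`. -/
theorem ctransform_hasDeriv_at_zero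
    (m d p : ℕ) (lam L M : ℝ) (hlam : 0 < lam)
    (F : Fin p → Zsp m d → ℝ)
    (hC2 : ∀ j, ContDiff ℝ 2 (F j))
    (hL : ∀ j z, ‖fderiv ℝ (F j) z‖ ≤ L)
    (hM : ∀ j z, ‖fderiv ℝ (fderiv ℝ (F j)) z‖ ≤ M)
    (z' : Zsp m d) :
    DifferentiableAt ℝ (fun β : EuclideanSpace ℝ (Fin p) =>
        ctrans lam (fun z => ∑ j, β j * F j z) z') 0 ∧
    ∀ j : Fin p,
      fderiv ℝ (fun β : EuclideanSpace ℝ (Fin p) =>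
          ctrans lam (fun z => ∑ j, β j * F j z) z') 0 (EuclideanSpace.single j 1)
        = -F j z' := by
  have h := hasFDerivAt_ctrans hlam F (fun j => (hC2 j).differentiable two_ne_zero) hL z'
  refine ⟨h.differentiableAt, fun j => ?_⟩
  rw [h.fderiv]
  simp [PiLp.single_apply]
end
end

section
/- Let λ > 0, let F₁,…,F_p : ℝⁿ → ℝ (ℝⁿ = ℝᵐ × ℝᵈ) be twice continuously differentiable with ‖∇F_j(z)‖ ≤ L and ‖∇²F_j(z)‖ ≤ M for all z and j, set φ_β = Σ_{j=1}^p β_j F_j, fix points z¹,…,z^N and (z')¹,…,(z')^M in ℝⁿ, and define Ĵ(β) = (1/N) Σ_{i=1}^N φ_β(zⁱ) + (1/M) Σ_{i=1}^M φ_β^c((z')ⁱ). Set G_j = (1/N) Σ_i F_j(zⁱ) − (1/M) Σ_i F_j((z')ⁱ) and H_{jk} = (1/M) Σ_{i=1}^M ⟨∇F_j((z')ⁱ), ∇_λF_k((z')ⁱ)⟩. Then there exist δ > 0 and C ≥ 0 such that for all β with ‖β‖ ≤ δ, |Ĵ(β) − Σ_j β_j G_j + (1/2) Σ_{j,k} β_j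 β_k H_{jk}| ≤ C‖β‖³; in particular the Hessian in the second-order Taylor expansion of Ĵ at β = 0 is −H. -/
/-! At a single point `w`, write `φ = Σ β_j F_j`. Its derivative has norm `O(‖β‖)` and Lipschitz
constant `K = O(‖β‖)`, so `φ (w + h) = φ w + Dφ(w) h + O(K ‖h‖²)`. Hence `c_λ (w + h, w) - φ (w + h)`
is, up to `K ‖h‖²`, the quadratic `(λ ‖h₁‖² + ‖h₂‖²) / 2 - Dφ(w) h - φ w`, whose minimum
`-φ w - ⟨∇φ, ∇_λ φ⟩ / 2` is attained at `h = ∇_λ φ(w) = O(‖β‖)`. Evaluating at this `h` bounds the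
infimum from above with error `K ‖h‖² = O(‖β‖³)`. For the lower bound, once `4 K ≤ min λ 1` the
perturbation `K ‖h‖²` is absorbed in the quadratic at the cost of `O(K ‖Dφ(w)‖²)`
(`quadratic_lower_bound`). This is `abs_ctrans_expansion_le`; the theorem follows by averaging it
over the target points, the first average in the objective being linear in `β`. -/

open scoped RealInnerProductSpace
open MeasureTheory

noncomputable section

/-- First-order Taylor bound from a Lipschitz derivative at the base point. The constant is `K`
rather than the sharp `K / 2`, which does not affect the order of the error. -/
lemma abs_taylor_one_le {m d : ℕ} {φ : Zsp m d → ℝ} (hφ : Differentiable ℝ φ) {w : Zsp m d}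
    {K : ℝ} (hK : 0 ≤ K) (hLip : ∀ z, ‖fderiv ℝ φ z - fderiv ℝ φ w‖ ≤ K * ‖z - w‖)
    (z : Zsp m d) :
    |φ z - φ w - fderiv ℝ φ w (z - w)| ≤ K * ‖z - w‖ ^ 2 := by
  have h := (convex_closedBall w ‖z - w‖).norm_image_sub_le_of_norm_fderiv_le' (𝕜 := ℝ)
    (f := φ) (φ := fderiv ℝ φ w) (C := K * ‖z - w‖) (x := w) (y := z)
    (fun x _ => hφ x)
    (fun x hx => (hLip x).trans (mul_le_mul_of_nonneg_left (mem_closedBall_iff_norm.1 hx) hK))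
    (by simp) (by simp [dist_eq_norm])
  rw [Real.norm_eq_abs] at h
  calc _ ≤ _ := h
    _ = _ := by ring

lemma inner_gradY {m d : ℕ} {φ : Zsp m d → ℝ} (hφ : Differentiable ℝ φ)
    (w : Zsp m d) (u : EuclideanSpace ℝ (Fin m)) :
    ⟪gradY φ w, u⟫ = fderiv ℝ φ w (u, 0) := by
  have h : HasFDerivAt (fun y => φ (y, w.2))
      ((fderiv ℝ φ w).comp (ContinuousLinearMap.inl ℝ _ _)) w.1 :=
    HasFDerivAt.comp (g := φ) w.1 (hφ w).hasFDerivAt (hasFDerivAt_prodMk_left w.1 w.2)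
  simp [gradY, gradient, h.fderiv]

lemma inner_gradX {m d : ℕ} {φ : Zsp m d → ℝ} (hφ : Differentiable ℝ φ)
    (w : Zsp m d) (v : EuclideanSpace ℝ (Fin d)) :
    ⟪gradX φ w, v⟫ = fderiv ℝ φ w (0, v) := by
  have h : HasFDerivAt (fun x => φ (w.1, x))
      ((fderiv ℝ φ w).comp (ContinuousLinearMap.inr ℝ _ _)) w.2 :=
    HasFDerivAt.comp (g := φ) w.2 (hφ w).hasFDerivAt (hasFDerivAt_prodMk_right w.1 w.2)
  simp [gradX, gradient, h.fderiv]

lemma fderiv_apply_eq_inner {m d : ℕ} {φ : Zsp m d → ℝ} (hφ : Differentiable ℝ φ)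
    (w h : Zsp m d) :
    fderiv ℝ φ w h = ⟪gradY φ w, h.1⟫ + ⟪gradX φ w, h.2⟫ := by
  rw [inner_gradY hφ, inner_gradX hφ, ← map_add]
  simp

lemma norm_gradY_le {m d : ℕ} {φ : Zsp m d → ℝ} (hφ : Differentiable ℝ φ) (w : Zsp m d) :
    ‖gradY φ w‖ ≤ ‖fderiv ℝ φ w‖ := by
  have h1 := (fderiv ℝ φ w).le_opNorm (gradY φ w, 0)
  rw [← inner_gradY hφ, real_inner_self_eq_norm_sq, Real.norm_of_nonneg (sq_nonneg _)] at h1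
  have h2 : ‖((gradY φ w, 0) : Zsp m d)‖ = ‖gradY φ w‖ := by simp [Prod.norm_def]
  rw [h2, sq] at h1
  rcases (norm_nonneg (gradY φ w)).eq_or_lt with h0 | h0
  · rw [← h0]; positivity
  · exact le_of_mul_le_mul_right h1 h0

lemma norm_gradX_le {m d : ℕ} {φ : Zsp m d → ℝ} (hφ : Differentiable ℝ φ) (w : Zsp m d) :
    ‖gradX φ w‖ ≤ ‖fderiv ℝ φ w‖ := by
  have h1 := (fderiv ℝ φ w).le_opNorm (0, gradX φ w)
  rw [← inner_gradX hφ, real_inner_self_eq_norm_sq, Real.norm_of_nonneg (sq_nonneg _)] at h1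
  have h2 : ‖((0, gradX φ w) : Zsp m d)‖ = ‖gradX φ w‖ := by simp [Prod.norm_def]
  rw [h2, sq] at h1
  rcases (norm_nonneg (gradX φ w)).eq_or_lt with h0 | h0
  · rw [← h0]; positivity
  · exact le_of_mul_le_mul_right h1 h0

lemma norm_sq_le_add {m d : ℕ} (h : Zsp m d) : ‖h‖ ^ 2 ≤ ‖h.1‖ ^ 2 + ‖h.2‖ ^ 2 := by
  rw [Prod.norm_def]
  rcases max_choice ‖h.1‖ ‖h.2‖ with e | e <;> rw [e] <;>
    nlinarith [sq_nonneg ‖h.1‖, sq_nonneg ‖h.2‖]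

/-- Minimum over `t` of the quadratic `(s / 2 - K) t² - g t`, compared with its value
`-g² / (2 s)` at `K = 0`. -/
lemma quadratic_lower_bound {s K g t : ℝ} (hs : 0 < s) (hK : 0 ≤ K) (hKs : 4 * K ≤ s) :
    -(g ^ 2 / s) / 2 - 2 * K * (g ^ 2 / s ^ 2) ≤ (s / 2 - K) * t ^ 2 - g * t := by
  obtain ⟨q, rfl⟩ : ∃ q, g = s * q := ⟨g / s, by field_simp⟩
  have e1 : (s * q) ^ 2 / s = s * q ^ 2 := by field_simp
  have e2 : (s * q) ^ 2 / s ^ 2 = q ^ 2 := by field_simp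
  rw [e1, e2]
  -- The difference of the two sides is `(s - 4K)/2 * (t - q)² + K (t - 2q)²`.
  nlinarith [mul_nonneg (sub_nonneg.2 hKs) (sq_nonneg (t - q)),
    mul_nonneg hK (sq_nonneg (t - 2 * q))]

/-- The second-order expansion of the `c`-transform at one point. The candidate minimiser is
`w + ∇_λ φ(w)`, and the error is cubic when `K` and `A` are both of first order. -/
lemma abs_ctrans_expansion_le {m d : ℕ} {lam : ℝ} (hlam : 0 < lam) {φ : Zsp m d → ℝ}
    (hφ : Differentiable ℝ φ) {w : Zsp m d} {K A : ℝ} (hK : 0 ≤ K)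
    (hLip : ∀ z, ‖fderiv ℝ φ z - fderiv ℝ φ w‖ ≤ K * ‖z - w‖)
    (hA : ‖fderiv ℝ φ w‖ ≤ A) (hKlam : 4 * K ≤ lam) (hK1 : 4 * K ≤ 1) :
    |ctrans lam φ w + φ w + innerLam lam φ φ w / 2| ≤ (2 / lam ^ 2 + 2) * K * A ^ 2 := by
  have hT := abs_taylor_one_le hφ hK hLip
  have hgY : ‖gradY φ w‖ ^ 2 ≤ A ^ 2 :=
    pow_le_pow_left₀ (norm_nonneg _) ((norm_gradY_le hφ w).trans hA) 2
  have hgX : ‖gradX φ w‖ ^ 2 ≤ A ^ 2 :=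
    pow_le_pow_left₀ (norm_nonneg _) ((norm_gradX_le hφ w).trans hA) 2
  have hQ : innerLam lam φ φ w = ‖gradY φ w‖ ^ 2 / lam + ‖gradX φ w‖ ^ 2 := by
    simp only [innerLam, real_inner_self_eq_norm_sq]
  have hgYl : K * (‖gradY φ w‖ ^ 2 / lam ^ 2) ≤ K * (A ^ 2 / lam ^ 2) := by gcongr
  have hgXl : K * ‖gradX φ w‖ ^ 2 ≤ K * A ^ 2 := by gcongr
  have hc : (2 / lam ^ 2 + 2) * K * A ^ 2 = 2 * (K * (A ^ 2 / lam ^ 2)) + 2 * (K * A ^ 2) := by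
    ring
  have hp1 : 0 ≤ K * (A ^ 2 / lam ^ 2) := by positivity
  have hp2 : 0 ≤ K * A ^ 2 := by positivity
  have hlow : ∀ z, -φ w - innerLam lam φ φ w / 2 - (2 / lam ^ 2 + 2) * K * A ^ 2
      ≤ cost lam z w - φ z := by
    intro z
    have h1 := (abs_le.1 (hT z)).2
    rw [fderiv_apply_eq_inner hφ] at h1
    have h2 := mul_le_mul_of_nonneg_left (norm_sq_le_add (z - w)) hK
    have h3 := real_inner_le_norm (gradY φ w) (z - w).1
    have h4 := real_inner_le_norm (gradX φ w) (z - w).2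
    have h5 := quadratic_lower_bound (g := ‖gradY φ w‖) (t := ‖(z - w).1‖) hlam hK hKlam
    have h6 := quadratic_lower_bound (g := ‖gradX φ w‖) (t := ‖(z - w).2‖) one_pos hK hK1
    have hcost : cost lam z w = (lam * ‖(z - w).1‖ ^ 2 + ‖(z - w).2‖ ^ 2) / 2 := rfl
    rw [hQ, hc, hcost]
    simp only [one_pow, div_one] at h6
    linarith
  have hbdd : BddBelow (Set.range fun z => cost lam z w - φ z) :=
    ⟨_, by rintro _ ⟨z, rfl⟩; exact hlow z⟩
  have hge := le_ciInf hlow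
  have hle := ciInf_le hbdd (w + gradLam lam φ w)
  have h1 := (abs_le.1 (hT (w + gradLam lam φ w))).1
  have h2 := mul_le_mul_of_nonneg_left (norm_sq_le_add (gradLam lam φ w)) hK
  have hcost : cost lam (w + gradLam lam φ w) w = innerLam lam φ φ w / 2 := by
    simp only [cost, gradLam, Prod.fst_add, Prod.snd_add, add_sub_cancel_left, hQ, norm_smul,
      mul_pow, norm_inv, Real.norm_eq_abs, inv_pow, sq_abs]
    field_simp
  have hD : fderiv ℝ φ w (gradLam lam φ w) = innerLam lam φ φ w := by
    rw [fderiv_apply_eq_inner hφ]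
    simp only [gradLam, innerLam, inner_smul_right]
    ring
  have hn : ‖(gradLam lam φ w).1‖ ^ 2 + ‖(gradLam lam φ w).2‖ ^ 2
      = ‖gradY φ w‖ ^ 2 / lam ^ 2 + ‖gradX φ w‖ ^ 2 := by
    simp only [gradLam, norm_smul, mul_pow, norm_inv, Real.norm_eq_abs, inv_pow, sq_abs]
    ring
  rw [add_sub_cancel_left, hD] at h1
  rw [hn, mul_add] at h2
  simp only [hcost] at hle
  rw [abs_le]
  change _ ≤ ctrans lam φ w at hge
  change ctrans lam φ w ≤ _ at hle
  constructor <;> linarith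

lemma fderiv_lincomb {m d p : ℕ} {F : Fin p → Zsp m d → ℝ} (hF : ∀ j, Differentiable ℝ (F j))
    (b : Fin p → ℝ) (z : Zsp m d) :
    fderiv ℝ (fun z => ∑ j, b j * F j z) z = ∑ j, b j • fderiv ℝ (F j) z :=
  (HasFDerivAt.fun_sum fun j _ => ((hF j z).hasFDerivAt.const_mul (b j))).fderiv

lemma innerLam_lincomb {m d p : ℕ} (lam : ℝ) {F : Fin p → Zsp m d → ℝ}
    (hF : ∀ j, Differentiable ℝ (F j)) (b : Fin p → ℝ) (z : Zsp m d) :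
    innerLam lam (fun z => ∑ j, b j * F j z) (fun z => ∑ j, b j * F j z) z
      = ∑ j, ∑ k, b j * b k * innerLam lam (F j) (F k) z := by
  have hφ : Differentiable ℝ (fun z => ∑ j, b j * F j z) :=
    Differentiable.fun_sum fun j _ => (hF j).const_mul (b j)
  have hY : gradY (fun z => ∑ j, b j * F j z) z = ∑ j, b j • gradY (F j) z := by
    refine ext_inner_right ℝ fun u => ?_
    rw [inner_gradY hφ, fderiv_lincomb hF, sum_inner]
    simp [inner_smul_left, inner_gradY (hF _)]
  have hX : gradX (fun z => ∑ j, b j * F j z) z = ∑ j, b j • gradX (F j) z := by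
    refine ext_inner_right ℝ fun u => ?_
    rw [inner_gradX hφ, fderiv_lincomb hF, sum_inner]
    simp [inner_smul_left, inner_gradX (hF _)]
  rw [innerLam, hY, hX, sum_inner, sum_inner, Finset.sum_div, ← Finset.sum_add_distrib]
  refine Finset.sum_congr rfl fun j _ => ?_
  rw [inner_sum, inner_sum, Finset.sum_div, ← Finset.sum_add_distrib]
  refine Finset.sum_congr rfl fun k _ => ?_
  simp only [innerLam, real_inner_smul_left, real_inner_smul_right]
  ring

/-- A combination with coefficients `b j`, `|b j| ≤ r`, of `p` vectors of norm at most `c`. -/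
lemma norm_lincomb_le {E : Type*} [NormedAddCommGroup E] [NormedSpace ℝ E] {p : ℕ}
    {b : Fin p → ℝ} {v : Fin p → E} {r c : ℝ} (hb : ∀ j, |b j| ≤ r) (hv : ∀ j, ‖v j‖ ≤ c) :
    ‖∑ j, b j • v j‖ ≤ p * (r * c) := by
  refine (norm_sum_le_of_le (f := fun j => b j • v j) (n := fun _ => r * c) _
    fun j _ => ?_).trans (by simp)
  rw [norm_smul, Real.norm_eq_abs]
  exact mul_le_mul (hb j) (hv j) (norm_nonneg _) ((abs_nonneg _).trans (hb j))

/-- second-order Taylor expansion of the empirical dual objective at `β = 0`: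
`Ĵ(β) = Σ_j β_j G_j − (1/2) Σ_{j,k} β_j β_k H_{jk} + O(‖β‖³)` where
`G_j = (1/N) Σ_i F_j(zⁱ) − (1/M) Σ_i F_j((z')ⁱ)` and
`H_{jk} = (1/M) Σ_i ⟨∇F_j((z')ⁱ), ∇_λF_k((z')ⁱ)⟩`; in particular the Hessian is `−H`. -/
theorem empirical_objective_second_order_expansion
    (m d p N M : ℕ) (lam L Mb : ℝ) (hlam : 0 < lam)
    (F : Fin p → Zsp m d → ℝ)
    (hC2 : ∀ j, ContDiff ℝ 2 (F j))
    (hL : ∀ j z, ‖fderiv ℝ (F j) z‖ ≤ L)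
    (hMb : ∀ j z, ‖fderiv ℝ (fderiv ℝ (F j)) z‖ ≤ Mb)
    (zR : Fin N → Zsp m d) (zT : Fin M → Zsp m d) :
    ∃ δ > (0 : ℝ), ∃ C ≥ (0 : ℝ), ∀ β : EuclideanSpace ℝ (Fin p), ‖β‖ ≤ δ →
      |((1 / N : ℝ) * ∑ i, (∑ j, β j * F j (zR i))
            + (1 / M : ℝ) * ∑ i, ctrans lam (fun z => ∑ j, β j * F j z) (zT i))
          - ∑ j, β j * ((1 / N : ℝ) * ∑ i, F j (zR i) - (1 / M : ℝ) * ∑ i, F j (zT i))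
          + (1 / 2) * ∑ j, ∑ k, β j * β k *
              ((1 / M : ℝ) * ∑ i, innerLam lam (F j) (F k) (zT i))|
        ≤ C * ‖β‖ ^ 3 := by
  have hF : ∀ j, Differentiable ℝ (F j) := fun j => (hC2 j).differentiable (by norm_num)
  have hF' : ∀ j, Differentiable ℝ (fderiv ℝ (F j)) := fun j =>
    ((hC2 j).fderiv_right (m := 1) (by norm_num)).differentiable (by norm_num)
  have hLipF : ∀ j z w, ‖fderiv ℝ (F j) z - fderiv ℝ (F j) w‖ ≤ |Mb| * ‖z - w‖ := fun j z w =>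
    convex_univ.norm_image_sub_le_of_norm_fderiv_le (𝕜 := ℝ) (fun x _ => hF' j x)
      (fun x _ => (hMb j x).trans (le_abs_self _)) (Set.mem_univ w) (Set.mem_univ z)
  set δ : ℝ := min lam 1 / (4 * (p * |Mb| + 1)) with hδ
  set c : ℝ := (2 / lam ^ 2 + 2) * (p * |Mb|) * (p * |L|) ^ 2 with hc
  have hmin : 0 < min lam 1 := lt_min hlam one_pos
  have hc0 : 0 ≤ c := by positivity
  refine ⟨δ, by positivity, c, hc0, fun β hβ => ?_⟩
  have hb : ∀ j, |β j| ≤ ‖β‖ := fun j => by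
    simpa using PiLp.norm_apply_le β j
  have hφ : Differentiable ℝ (fun z => ∑ j, β j * F j z) :=
    Differentiable.fun_sum fun j _ => (hF j).const_mul (β j)
  have hKδ : 4 * (p * |Mb| * ‖β‖) ≤ min lam 1 := by
    rw [hδ, le_div_iff₀ (by positivity)] at hβ
    nlinarith [norm_nonneg β]
  have hLip : ∀ z w : Zsp m d, ‖fderiv ℝ (fun z => ∑ j, β j * F j z) z
      - fderiv ℝ (fun z => ∑ j, β j * F j z) w‖ ≤ p * |Mb| * ‖β‖ * ‖z - w‖ := by
    intro z w
    have h := norm_lincomb_le hb fun j => hLipF j z w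
    simp only [smul_sub, Finset.sum_sub_distrib] at h
    rw [fderiv_lincomb hF, fderiv_lincomb hF]
    exact h.trans (le_of_eq (by ring))
  have hpt : ∀ w : Zsp m d,
      |ctrans lam (fun z => ∑ j, β j * F j z) w + ∑ j, β j * F j w
        + (∑ j, ∑ k, β j * β k * innerLam lam (F j) (F k) w) / 2| ≤ c * ‖β‖ ^ 3 := by
    intro w
    have h := abs_ctrans_expansion_le hlam hφ (w := w) (K := p * |Mb| * ‖β‖)
      (A := p * |L| * ‖β‖) (by positivity)
      (fun z => hLip z w)
      (by
        rw [fderiv_lincomb hF]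
        exact (norm_lincomb_le hb fun j => (hL j w).trans (le_abs_self L)).trans
          (le_of_eq (by ring)))
      (hKδ.trans (min_le_left _ _)) (hKδ.trans (min_le_right _ _))
    rw [innerLam_lincomb lam hF] at h
    exact h.trans (le_of_eq (by rw [hc]; ring))
  -- The terms at the points `zR i` cancel, leaving an average of the pointwise errors at `zT i`.
  have e1 : ∑ j, β j * ((1 / N : ℝ) * ∑ i, F j (zR i) - (1 / M : ℝ) * ∑ i, F j (zT i))
      = (1 / N : ℝ) * ∑ i, (∑ j, β j * F j (zR i))
        - (1 / M : ℝ) * ∑ i, (∑ j, β j * F j (zT i)) := by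
    rw [Finset.sum_comm, Finset.sum_comm (s := (Finset.univ : Finset (Fin M))), Finset.mul_sum,
      Finset.mul_sum, ← Finset.sum_sub_distrib]
    refine Finset.sum_congr rfl fun j _ => ?_
    rw [← Finset.mul_sum, ← Finset.mul_sum]
    ring
  have e2 : ∑ j, ∑ k, β j * β k * ((1 / M : ℝ) * ∑ i, innerLam lam (F j) (F k) (zT i))
      = (1 / M : ℝ) * ∑ i, ∑ j, ∑ k, β j * β k * innerLam lam (F j) (F k) (zT i) := by
    rw [Finset.sum_comm (s := (Finset.univ : Finset (Fin M))), Finset.mul_sum]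
    refine Finset.sum_congr rfl fun j _ => ?_
    rw [Finset.sum_comm (s := (Finset.univ : Finset (Fin M))), Finset.mul_sum]
    refine Finset.sum_congr rfl fun k _ => ?_
    rw [← Finset.mul_sum]
    ring
  rw [e1, e2]
  have e3 : ∀ a x y q : ℝ, a + 1 / M * x - (a - 1 / M * y) + 1 / 2 * (1 / M * q)
      = 1 / M * (x + y + q / 2) := fun a x y q => by ring
  rw [e3, Finset.sum_div, ← Finset.sum_add_distrib, ← Finset.sum_add_distrib, abs_mul,
    abs_of_nonneg (by positivity)]
  have hsum := (Finset.abs_sum_le_sum_abs _ _).trans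
    (Finset.sum_le_sum fun i (_ : i ∈ Finset.univ) => hpt (zT i))
  rw [Finset.sum_const, Finset.card_univ, Fintype.card_fin, nsmul_eq_mul] at hsum
  have hR : 0 ≤ c * ‖β‖ ^ 3 := by positivity
  refine (mul_le_mul_of_nonneg_left hsum (by positivity)).trans ?_
  -- For `M = 0` the factor `1 / M` is zero.
  rcases Nat.eq_zero_or_pos M with rfl | hM
  · simpa using hR
  · have : (0 : ℝ) < M := by exact_mod_cast hM
    rw [one_div, inv_mul_cancel_left₀ this.ne']
end
end

section
/- Let μ be a probability measure on ℝᵐ × ℝᵈ with first marginal μ_Y, let π be a probability measure on ℝᵈ, and let T^X : ℝᵐ × ℝᵈ → ℝᵈ be measurable. If the block-triangular map T(y,x) = (y, T^X(y,x)) pushes forward the product measure μ_Y ⊗ π to μ (i.e., T_♯(μ_Y ⊗ π) = μ), then for μ_Y-almost every y, the pushforward of π under the map x ↦ T^X(y,x) equals the conditional distribution μ(·|y). -/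
open MeasureTheory

/-- if the block-triangular map `T(y,x) = (y, T^X(y,x))` pushes forward the
product measure `μ_Y ⊗ π` to `μ`, then for `μ_Y`-almost every `y` the pushforward of `π`
under `x ↦ T^X(y,x)` equals the conditional distribution `μ(·|y)`. -/
theorem blockTriangular_pushforward_conditional
    (m d : ℕ)
    (μ : Measure (EuclideanSpace ℝ (Fin m) × EuclideanSpace ℝ (Fin d)))
    [IsProbabilityMeasure μ]
    (π : Measure (EuclideanSpace ℝ (Fin d))) [IsProbabilityMeasure π]
    (TX : EuclideanSpace ℝ (Fin m) × EuclideanSpace ℝ (Fin d) → EuclideanSpace ℝ (Fin d))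
    (hTX : Measurable TX)
    (hpush : Measure.map (fun z => (z.1, TX z)) (μ.fst.prod π) = μ) :
    ∀ᵐ y ∂μ.fst, Measure.map (fun x => TX (y, x)) π = μ.condKernel y := by
  -- The kernel `y ↦ (δ_y ⊗ π) ∘ TX⁻¹` packages the pushforwards `TX(y, ·)_♯ π` measurably in `y`;
  -- it disintegrates `μ`, so it is the conditional kernel by a.e. uniqueness.
  let κ : ProbabilityTheory.Kernel (EuclideanSpace ℝ (Fin m)) (EuclideanSpace ℝ (Fin d)) :=
    (ProbabilityTheory.Kernel.id.prod (ProbabilityTheory.Kernel.const _ π)).map TX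
  have hκ_apply (y) : κ y = Measure.map (fun x => TX (y, x)) π := by
    rw [ProbabilityTheory.Kernel.map_apply _ hTX, ProbabilityTheory.Kernel.prod_apply,
      ProbabilityTheory.Kernel.id_apply, ProbabilityTheory.Kernel.const_apply,
      Measure.dirac_prod, Measure.map_map hTX measurable_prodMk_left]
    rfl
  have hT : Measurable (fun z => (z.1, TX z)) := measurable_fst.prodMk hTX
  have hκ : μ = μ.fst.compProd κ := by
    ext s hs
    -- Only the left-hand `μ` is rewritten: `hpush` itself mentions `μ.fst`.
    conv_lhs => rw [← hpush]
    rw [Measure.map_apply hT hs, Measure.prod_apply (hT hs), Measure.compProd_apply hs]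
    refine lintegral_congr fun y => ?_
    rw [hκ_apply, Measure.map_apply (by fun_prop) (measurable_prodMk_left hs)]
    rfl
  filter_upwards [ProbabilityTheory.eq_condKernel_of_measure_eq_compProd κ hκ] with y hy
  rw [← hκ_apply, hy]
end

section
/- Let μ be a probability measure on ℝᵐ × ℝᵈ with first marginal μ_Y, let π be a probability measure on ℝᵈ, and let T₁^X,…,T_K^X : ℝᵐ × ℝᵈ → ℝᵈ be measurable maps; set T_t(y,x) = (y, T_t^X(y,x)) and T = T_K ∘ ⋯ ∘ T₁. If T_♯(μ_Y ⊗ π) = μ, then for μ_Y-almost every y, the pushforward of π under the composed map x ↦ T_K^X(y, T_{K−1}^X(y, …, T₁^X(y,x)…)) equals the conditional distribution μ(·|y). -/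
/-!
The composition of block-triangular maps is again block-triangular:
`compT TX (y, x) = (y, compTX TX y x)` (`compT_eq`). Hence, by Tonelli's theorem, the pushforward of
`ν ⊗ π` under it is the measure `ν ⊗ₘ κ` with the Markov kernel `κ y = (compTX TX y)_♯ π`
(`map_compT_prod`). The hypothesis then says `μ = μ.fst ⊗ₘ κ`, and the a.e. uniqueness of
disintegrations identifies `κ` with `μ.condKernel`.
-/

open MeasureTheory

/-- The composed block-triangular map `T = T_K ∘ ⋯ ∘ T₁`, where `T_t(y,x) = (y, T_t^X(y,x))`,
applied by folding over `t = 1, …, K`. -/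
def compT {m d K : ℕ}
    (TX : Fin K → EuclideanSpace ℝ (Fin m) × EuclideanSpace ℝ (Fin d) →
      EuclideanSpace ℝ (Fin d))
    (z : EuclideanSpace ℝ (Fin m) × EuclideanSpace ℝ (Fin d)) :
    EuclideanSpace ℝ (Fin m) × EuclideanSpace ℝ (Fin d) :=
  (List.finRange K).foldl (fun w t => (w.1, TX t w)) z

/-- The composed second component `x ↦ T_K^X(y, T_{K−1}^X(y, …, T₁^X(y,x)…))`. -/
def compTX {m d K : ℕ}
    (TX : Fin K → EuclideanSpace ℝ (Fin m) × EuclideanSpace ℝ (Fin d) →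
      EuclideanSpace ℝ (Fin d))
    (y : EuclideanSpace ℝ (Fin m)) (x : EuclideanSpace ℝ (Fin d)) :
    EuclideanSpace ℝ (Fin d) :=
  (List.finRange K).foldl (fun x t => TX t (y, x)) x

open ProbabilityTheory

section BlockTriangular

variable {m d K : ℕ}
  {TX : Fin K → EuclideanSpace ℝ (Fin m) × EuclideanSpace ℝ (Fin d) → EuclideanSpace ℝ (Fin d)}

lemma compT_eq (z : EuclideanSpace ℝ (Fin m) × EuclideanSpace ℝ (Fin d)) :
    compT TX z = (z.1, compTX TX z.1 z.2) := by
  unfold compT compTX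
  induction List.finRange K generalizing z with
  | nil => rfl
  | cons t l ih => simp only [List.foldl_cons, ih]

lemma measurable_compT (hTX : ∀ t, Measurable (TX t)) : Measurable (compT TX) := by
  unfold compT
  induction List.finRange K with
  | nil => exact measurable_id
  | cons t l ih => exact ih.comp (measurable_fst.prodMk (hTX t))

lemma measurable_compTX (hTX : ∀ t, Measurable (TX t)) (y : EuclideanSpace ℝ (Fin m)) :
    Measurable (compTX TX y) := by
  have h : compTX TX y = fun x => (compT TX (y, x)).2 := by
    funext x
    rw [compT_eq]
  rw [h]
  exact measurable_snd.comp ((measurable_compT hTX).comp measurable_prodMk_left)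

/-- The kernel `y ↦ (compTX TX y)_♯ π`. -/
noncomputable def pushKernel (hTX : ∀ t, Measurable (TX t))
    (π : Measure (EuclideanSpace ℝ (Fin d))) [IsProbabilityMeasure π] :
    Kernel (EuclideanSpace ℝ (Fin m)) (EuclideanSpace ℝ (Fin d)) where
  toFun y := Measure.map (compTX TX y) π
  measurable' := by
    refine Measure.measurable_of_measurable_coe _ fun s hs => ?_
    have h : ∀ y, Measure.map (compTX TX y) π s
        = π (Prod.mk y ⁻¹' ((fun z => (compT TX z).2) ⁻¹' s)) := by
      intro y
      rw [Measure.map_apply (measurable_compTX hTX y) hs]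
      congr 1
      ext x
      simp only [Set.mem_preimage, compT_eq]
    simp only [h]
    exact measurable_measure_prodMk_left ((measurable_snd.comp (measurable_compT hTX)) hs)

instance (hTX : ∀ t, Measurable (TX t))
    (π : Measure (EuclideanSpace ℝ (Fin d))) [IsProbabilityMeasure π] :
    IsMarkovKernel (pushKernel hTX π) :=
  ⟨fun y => Measure.isProbabilityMeasure_map (measurable_compTX hTX y).aemeasurable⟩

lemma map_compT_prod (hTX : ∀ t, Measurable (TX t))
    (ν : Measure (EuclideanSpace ℝ (Fin m))) [IsProbabilityMeasure ν]
    (π : Measure (EuclideanSpace ℝ (Fin d))) [IsProbabilityMeasure π] :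
    Measure.map (compT TX) (ν.prod π) = ν.compProd (pushKernel hTX π) := by
  ext s hs
  rw [Measure.map_apply (measurable_compT hTX) hs, Measure.compProd_apply hs,
    Measure.prod_apply (measurable_compT hTX hs)]
  refine lintegral_congr fun y => ?_
  change _ = Measure.map (compTX TX y) π _
  rw [Measure.map_apply (measurable_compTX hTX y) (measurable_prodMk_left hs)]
  congr 1
  ext x
  simp only [Set.mem_preimage, compT_eq]

end BlockTriangular

/-- if the composition `T = T_K ∘ ⋯ ∘ T₁` of block-triangular maps
`T_t(y,x) = (y, T_t^X(y,x))` pushes forward `μ_Y ⊗ π` to `μ`, then for `μ_Y`-almost every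
`y` the pushforward of `π` under the composed map
`x ↦ T_K^X(y, T_{K−1}^X(y, …, T₁^X(y,x)…))` equals the conditional distribution `μ(·|y)`. -/
theorem composed_blockTriangular_pushforward_conditional
    (m d K : ℕ)
    (μ : Measure (EuclideanSpace ℝ (Fin m) × EuclideanSpace ℝ (Fin d)))
    [IsProbabilityMeasure μ]
    (π : Measure (EuclideanSpace ℝ (Fin d))) [IsProbabilityMeasure π]
    (TX : Fin K → EuclideanSpace ℝ (Fin m) × EuclideanSpace ℝ (Fin d) →
      EuclideanSpace ℝ (Fin d))
    (hTX : ∀ t, Measurable (TX t))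
    (hpush : Measure.map (compT TX) (μ.fst.prod π) = μ) :
    ∀ᵐ y ∂μ.fst, Measure.map (compTX TX y) π = μ.condKernel y := by
  exact eq_condKernel_of_measure_eq_compProd (pushKernel hTX π)
    (hpush.symm.trans (map_compT_prod hTX μ.fst π))
end

section
/- Let λ > 0 and write points of ℝⁿ = ℝᵐ × ℝᵈ as z = (y,x). Let φ : ℝⁿ → ℝ be differentiable with ‖∇φ(z)‖ ≤ L for all z. Then for every z' ∈ ℝⁿ the infimum defining the c-transform φ^c(z') = inf_z (c_λ(z,z') − φ(z)) is attained at some z̄ ∈ ℝⁿ, and every global minimizer z̄ = (ȳ, x̄) satisfies ‖ȳ − y'‖ ≤ L/λ and ‖x̄ − x'‖ ≤ L, hence ‖z̄ − z'‖ ≤ L(1 + 1/λ). -/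
/-!
The bound on the derivative makes `φ` `L`-Lipschitz, so `c_λ(z, z') - φ z` grows quadratically in
`‖z - z'‖`; being continuous, it attains its infimum. At a minimizer, sliding one block
of coordinates from `zbar` towards `z'` by a fraction `t` lowers the cost by
`a (2t - t²) r² / 2`, where `r` is the distance in that block and `a` its weight, and changes `φ`
by at most `L t r`. Minimality and `t → 0` give `a r ≤ L` (`mul_le_of_slide`).
-/

open scoped RealInnerProductSpace
open MeasureTheory

noncomputable section

/-- The one-variable first-order condition, obtained from difference quotients: dividing the
hypothesis by `t r` and letting `t` tend to `0` gives `a r ≤ L`. -/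
lemma mul_le_of_slide {a r L : ℝ} (ha : 0 < a) (hr : 0 ≤ r) (hL : 0 ≤ L)
    (h : ∀ t : ℝ, 0 < t → t ≤ 1 → a * r ^ 2 - a * ((1 - t) * r) ^ 2 ≤ 2 * (L * (t * r))) :
    a * r ≤ L := by
  by_contra! hlt
  have hr0 : 0 < r := by
    rcases hr.eq_or_lt with h0 | h0
    · rw [← h0] at hlt; linarith
    · exact h0
  have har : 0 < a * r := mul_pos ha hr0
  -- With `t = 1 - L / (a r)` the hypothesis reduces to `(a r + L) / 2 ≤ L`.
  obtain ⟨t, ht⟩ : ∃ t : ℝ, t * (a * r) = a * r - L :=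
    ⟨(a * r - L) / (a * r), by field_simp⟩
  have ht0 : 0 < t := by
    by_contra! hn
    nlinarith
  have ht1 : t ≤ 1 := by
    by_contra! hn
    nlinarith
  have h1 := h t ht0 ht1
  have h2 : 0 < t * r := mul_pos ht0 hr0
  have h3 : a * r ^ 2 - a * ((1 - t) * r) ^ 2 = (t * r) * (2 * (a * r) - t * (a * r)) := by ring
  rw [h3, ht] at h1
  nlinarith

/-- for `φ` differentiable with `‖∇φ‖ ≤ L`, the infimum defining the
c-transform is attained, and every global minimizer `z̄ = (ȳ,x̄)` satisfies
`‖ȳ − y'‖ ≤ L/λ`, `‖x̄ − x'‖ ≤ L`, hence `‖z̄ − z'‖ ≤ L(1 + 1/λ)`. -/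
theorem ctransform_attained_and_minimizer_bounds
    (m d : ℕ) (lam L : ℝ) (hlam : 0 < lam)
    (φ : Zsp m d → ℝ) (hφ : Differentiable ℝ φ)
    (hL : ∀ z, ‖fderiv ℝ φ z‖ ≤ L)
    (z' : Zsp m d) :
    (∃ zbar : Zsp m d,
        ctrans lam φ z' = cost lam zbar z' - φ zbar ∧
        ∀ z : Zsp m d, cost lam zbar z' - φ zbar ≤ cost lam z z' - φ z) ∧
    ∀ zbar : Zsp m d,
      (∀ z : Zsp m d, cost lam zbar z' - φ zbar ≤ cost lam z z' - φ z) →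
        ‖zbar.1 - z'.1‖ ≤ L / lam ∧ ‖zbar.2 - z'.2‖ ≤ L ∧
        ‖zbar - z'‖ ≤ L * (1 + 1 / lam) := by
  have hL0 : 0 ≤ L := (norm_nonneg _).trans (hL z')
  have hlip : ∀ z w : Zsp m d, φ z - φ w ≤ L * ‖z - w‖ := fun z w =>
    (le_abs_self _).trans <| Convex.norm_image_sub_le_of_norm_fderiv_le
      (fun x _ => hφ x) (fun x _ => hL x) convex_univ (Set.mem_univ w) (Set.mem_univ z)
  refine ⟨?_, ?_⟩
  · have hcont : Continuous fun z : Zsp m d => cost lam z z' - φ z := by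
      have := hφ.continuous
      unfold cost
      fun_prop
    set μ := min lam 1 with hμ
    have hμ0 : 0 < μ := lt_min hlam one_pos
    have hcost : ∀ z : Zsp m d, μ * ‖z - z'‖ ^ 2 ≤ 2 * cost lam z z' := by
      intro z
      have h1 : μ ≤ lam := min_le_left _ _
      have h2 : μ ≤ 1 := min_le_right _ _
      have e1 := sq_nonneg ‖z.1 - z'.1‖
      have e2 := sq_nonneg ‖z.2 - z'.2‖
      have e3 := mul_nonneg hlam.le e1
      unfold cost
      rw [Prod.norm_def, Prod.fst_sub, Prod.snd_sub]
      rcases max_choice ‖z.1 - z'.1‖ ‖z.2 - z'.2‖ with h | h <;> rw [h] <;> nlinarith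
    have hco : Filter.Tendsto (fun z : Zsp m d => ‖z - z'‖)
        (Filter.cocompact _) Filter.atTop := by
      simpa [dist_eq_norm] using tendsto_dist_right_cocompact_atTop z'
    obtain ⟨zbar, hz⟩ := hcont.exists_forall_le' z' (by
      filter_upwards [hco.eventually_ge_atTop (2 * L / μ)] with z hz
      have h1 := hcost z
      have h2 := hlip z z'
      rw [div_le_iff₀ hμ0] at hz
      -- Outside the ball of radius `2 L / μ` the quadratic growth beats the Lipschitz bound.
      have h3 : cost lam z' z' = 0 := by simp [cost]
      rw [h3]
      nlinarith [norm_nonneg (z - z')])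
    refine ⟨zbar, ?_, hz⟩
    have hbdd : BddBelow (Set.range fun z : Zsp m d => cost lam z z' - φ z) :=
      ⟨_, Set.forall_mem_range.2 hz⟩
    exact le_antisymm (ciInf_le hbdd zbar) (le_ciInf hz)
  · intro zbar hz
    have hy : lam * ‖zbar.1 - z'.1‖ ≤ L := by
      refine mul_le_of_slide hlam (norm_nonneg _) hL0 fun t ht0 ht1 => ?_
      have h1 := hz (zbar.1 - t • (zbar.1 - z'.1), zbar.2)
      have h2 := hlip zbar (zbar.1 - t • (zbar.1 - z'.1), zbar.2)
      have e1 : ‖zbar.1 - t • (zbar.1 - z'.1) - z'.1‖ = (1 - t) * ‖zbar.1 - z'.1‖ := by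
        rw [show zbar.1 - t • (zbar.1 - z'.1) - z'.1 = (1 - t) • (zbar.1 - z'.1) by module,
          norm_smul, Real.norm_of_nonneg (by linarith)]
      have e2 : ‖zbar - (zbar.1 - t • (zbar.1 - z'.1), zbar.2)‖ = t * ‖zbar.1 - z'.1‖ := by
        rw [Prod.norm_def]
        simp only [Prod.fst_sub, Prod.snd_sub, sub_sub_cancel, sub_self, norm_zero]
        rw [max_eq_left (norm_nonneg _), norm_smul, Real.norm_of_nonneg ht0.le]
      simp only [cost, e1] at h1
      rw [e2] at h2
      linarith
    have hx : 1 * ‖zbar.2 - z'.2‖ ≤ L := by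
      refine mul_le_of_slide one_pos (norm_nonneg _) hL0 fun t ht0 ht1 => ?_
      have h1 := hz (zbar.1, zbar.2 - t • (zbar.2 - z'.2))
      have h2 := hlip zbar (zbar.1, zbar.2 - t • (zbar.2 - z'.2))
      have e1 : ‖zbar.2 - t • (zbar.2 - z'.2) - z'.2‖ = (1 - t) * ‖zbar.2 - z'.2‖ := by
        rw [show zbar.2 - t • (zbar.2 - z'.2) - z'.2 = (1 - t) • (zbar.2 - z'.2) by module,
          norm_smul, Real.norm_of_nonneg (by linarith)]
      have e2 : ‖zbar - (zbar.1, zbar.2 - t • (zbar.2 - z'.2))‖ = t * ‖zbar.2 - z'.2‖ := by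
        rw [Prod.norm_def]
        simp only [Prod.fst_sub, Prod.snd_sub, sub_sub_cancel, sub_self, norm_zero]
        rw [max_eq_right (norm_nonneg _), norm_smul, Real.norm_of_nonneg ht0.le]
      simp only [cost, e1] at h1
      rw [e2] at h2
      linarith
    have hy' : ‖zbar.1 - z'.1‖ ≤ L / lam := by
      rw [le_div_iff₀ hlam]; linarith
    rw [one_mul] at hx
    refine ⟨hy', hx, ?_⟩
    have e : L * (1 + 1 / lam) = L + L / lam := by ring
    have hq : 0 ≤ L / lam := div_nonneg hL0 hlam.le
    -- The product norm is the maximum of the two block norms.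
    rw [e, Prod.norm_def, Prod.fst_sub, Prod.snd_sub]
    exact max_le (by linarith) (by linarith)
end
end

section
/- Let λ > 0 and let F₁,…,F_p : ℝⁿ → ℝ (ℝⁿ = ℝᵐ × ℝᵈ) be twice continuously differentiable with ‖∇F_j(z)‖ ≤ L and ‖∇²F_j(z)‖ ≤ M for all z and j, and set φ_β = Σ_{j=1}^p β_j F_j. Then there exist δ > 0 and C ≥ 0 such that for every β with ‖β‖ ≤ δ, every z' ∈ ℝⁿ, and every global minimizer z̄ of z ↦ c_λ(z,z') − φ_β(z), one has |φ_β(z̄) − φ_β(z') − Σ_{j,k} β_j β_k ⟨∇F_j(z'), ∇_λF_k(z')⟩| ≤ C‖β‖³. -/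
/-!
Write `φ = ∑ j, β j * F j`, `Δ = zbar - z'`, and let `w = gradLam lam φ z'`. The second-order term of
the expansion is `Dφ(z') w`. The first-order condition at the minimizer says that
`lam ⟪Δ.1, u⟫ + ⟪Δ.2, v⟫ = Dφ(zbar) (u, v)`, whereas by definition
`lam ⟪w.1, u⟫ + ⟪w.2, v⟫ = Dφ(z') (u, v)`. If `‖Dφ‖ ≤ A` and `‖D²φ‖ ≤ B`, coercivity of the weighted
form (with constant `κ = min lam 1`) gives `‖Δ‖ ≤ A / κ`, and, after subtracting the two identities,
`‖Δ - w‖ ≤ B ‖Δ‖ / κ`. Hence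
`φ(zbar) - φ(z') = Dφ(z') Δ + O(B ‖Δ‖²) = Dφ(z') w + O(A² B / κ²)`,
and both `A` and `B` are `O(‖β‖)`.
-/

open scoped RealInnerProductSpace
open MeasureTheory

noncomputable section

/-- The partial gradients are the Riesz representatives of the restrictions of the derivative to the
two factors. -/
lemma inner_gradY_add_inner_gradX {m d : ℕ} {F : Zsp m d → ℝ} {z : Zsp m d}
    (hF : DifferentiableAt ℝ F z) (h : Zsp m d) :
    ⟪gradY F z, h.1⟫ + ⟪gradX F z, h.2⟫ = fderiv ℝ F z h := by
  have h1 : HasFDerivAt (fun y => F (y, z.2))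
      ((fderiv ℝ F z).comp (ContinuousLinearMap.inl ℝ _ _)) z.1 :=
    HasFDerivAt.comp (g := F) z.1 hF.hasFDerivAt (hasFDerivAt_prodMk_left z.1 z.2)
  have h2 : HasFDerivAt (fun x => F (z.1, x))
      ((fderiv ℝ F z).comp (ContinuousLinearMap.inr ℝ _ _)) z.2 :=
    HasFDerivAt.comp (g := F) z.2 hF.hasFDerivAt (hasFDerivAt_prodMk_right z.1 z.2)
  rw [gradY, gradX, gradient, gradient, h1.fderiv, h2.fderiv,
    InnerProductSpace.toDual_symm_apply, InnerProductSpace.toDual_symm_apply]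
  simp only [ContinuousLinearMap.comp_apply, ContinuousLinearMap.inl_apply,
    ContinuousLinearMap.inr_apply]
  rw [← map_add]
  simp

lemma innerLam_eq_fderiv (lam : ℝ) {m d : ℕ} {F : Zsp m d → ℝ} (G : Zsp m d → ℝ) {z : Zsp m d}
    (hF : DifferentiableAt ℝ F z) :
    innerLam lam F G z = fderiv ℝ F z (gradLam lam G z) := by
  rw [← inner_gradY_add_inner_gradX hF]
  simp only [innerLam, gradLam, real_inner_smul_right]
  ring

lemma innerLam_comm (lam : ℝ) {m d : ℕ} (F G : Zsp m d → ℝ) (z : Zsp m d) :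
    innerLam lam F G z = innerLam lam G F z := by
  simp only [innerLam, real_inner_comm]

/-- Linearity in the left slot, inherited from linearity of `fderiv`; the right slot then follows by
`innerLam_comm`. -/
lemma innerLam_sum_left (lam : ℝ) {m d p : ℕ} {F : Fin p → Zsp m d → ℝ} (b : Fin p → ℝ)
    (G : Zsp m d → ℝ) {z : Zsp m d} (hF : ∀ j, DifferentiableAt ℝ (F j) z) :
    innerLam lam (fun z => ∑ j, b j * F j z) G z = ∑ j, b j * innerLam lam (F j) G z := by
  have hd : HasFDerivAt (fun z => ∑ j, b j * F j z) (∑ j, b j • fderiv ℝ (F j) z) z :=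
    HasFDerivAt.fun_sum fun j _ => (hF j).hasFDerivAt.const_mul (b j)
  rw [innerLam_eq_fderiv lam G hd.differentiableAt, hd.fderiv]
  simp [fun j => innerLam_eq_fderiv lam G (hF j)]

/-- Coercivity of the weighted form, in the sup norm of the product. -/
lemma norm_le_of_weighted_le {m d : ℕ} {lam K : ℝ} (hlam : 0 < lam)
    (h : Zsp m d) (hh : lam * ‖h.1‖ ^ 2 + ‖h.2‖ ^ 2 ≤ K * ‖h‖) (hK : 0 ≤ K) :
    ‖h‖ ≤ K / min lam 1 := by
  have hκ : 0 < min lam 1 := lt_min hlam one_pos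
  rw [le_div_iff₀ hκ]
  rcases (norm_nonneg h).eq_or_lt with h0 | h0
  · rw [← h0]; simpa using hK
  have key : min lam 1 * ‖h‖ ^ 2 ≤ lam * ‖h.1‖ ^ 2 + ‖h.2‖ ^ 2 := by
    rcases max_choice ‖h.1‖ ‖h.2‖ with e | e
    · rw [Prod.norm_def, e]
      nlinarith [min_le_left lam 1, sq_nonneg ‖h.1‖, sq_nonneg ‖h.2‖]
    · rw [Prod.norm_def, e]
      nlinarith [min_le_right lam 1, sq_nonneg ‖h.2‖, mul_nonneg hlam.le (sq_nonneg ‖h.1‖)]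
  nlinarith

/-- First-order optimality condition at a minimizer of `z ↦ cost lam z z' - φ z`. -/
lemma weighted_inner_eq_fderiv_of_minimizer {m d : ℕ} {lam : ℝ} {φ : Zsp m d → ℝ}
    {z' zbar : Zsp m d} (hφ : DifferentiableAt ℝ φ zbar)
    (hmin : ∀ z, cost lam zbar z' - φ zbar ≤ cost lam z z' - φ z) (h : Zsp m d) :
    lam * ⟪zbar.1 - z'.1, h.1⟫ + ⟪zbar.2 - z'.2, h.2⟫ = fderiv ℝ φ zbar h := by
  have h1 : HasFDerivAt (fun z : Zsp m d => z.1 - z'.1)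
      (ContinuousLinearMap.fst ℝ _ _) zbar := hasFDerivAt_fst.sub_const _
  have h2 : HasFDerivAt (fun z : Zsp m d => z.2 - z'.2)
      (ContinuousLinearMap.snd ℝ _ _) zbar := hasFDerivAt_snd.sub_const _
  have hc := (((h1.norm_sq.const_mul lam).add h2.norm_sq).mul_const (1 / 2 : ℝ)).sub
    hφ.hasFDerivAt
  have hm : IsLocalMin (fun z : Zsp m d =>
      (lam * ‖z.1 - z'.1‖ ^ 2 + ‖z.2 - z'.2‖ ^ 2) * (1 / 2) - φ z) zbar := by
    refine Filter.Eventually.of_forall fun z => ?_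
    have := hmin z
    simp only [cost] at this
    linarith
  have h0 := congrArg (fun T => T h) (hm.hasFDerivAt_eq_zero hc)
  simp at h0
  rw [inner_sub_left, inner_sub_left]
  linarith

/-- The expansion for a single potential with bounded first and second derivatives. -/
lemma expansion_of_bounds {m d : ℕ} {lam A B : ℝ} (hlam : 0 < lam) {φ : Zsp m d → ℝ}
    (hφ : ContDiff ℝ 2 φ) (hA : ∀ z, ‖fderiv ℝ φ z‖ ≤ A)
    (hB : ∀ z, ‖fderiv ℝ (fderiv ℝ φ) z‖ ≤ B) {z' zbar : Zsp m d}
    (hmin : ∀ z, cost lam zbar z' - φ zbar ≤ cost lam z z' - φ z) :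
    |φ zbar - φ z' - innerLam lam φ φ z'| ≤ 2 * A ^ 2 * B / min lam 1 ^ 2 := by
  have hκ : 0 < min lam 1 := lt_min hlam one_pos
  have hA0 : 0 ≤ A := (norm_nonneg _).trans (hA z')
  have hB0 : 0 ≤ B := (norm_nonneg (fderiv ℝ (fderiv ℝ φ) z')).trans (hB z')
  have hd : Differentiable ℝ φ := hφ.differentiable (by norm_num)
  have hd2 : Differentiable ℝ (fderiv ℝ φ) :=
    (hφ.fderiv_right (m := 1) (by norm_num)).differentiable (by norm_num)
  have hLip : ∀ x, ‖fderiv ℝ φ x - fderiv ℝ φ z'‖ ≤ B * ‖x - z'‖ := fun x =>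
    convex_univ.norm_image_sub_le_of_norm_fderiv_le (fun y _ => hd2 y) (fun y _ => hB y)
      (Set.mem_univ z') (Set.mem_univ x)
  have hfoc := weighted_inner_eq_fderiv_of_minimizer (hd zbar) hmin
  set w := gradLam lam φ z' with hw
  have hwc : ∀ h : Zsp m d, lam * ⟪w.1, h.1⟫ + ⟪w.2, h.2⟫ = fderiv ℝ φ z' h := by
    intro h
    rw [← inner_gradY_add_inner_gradX (hd z'), hw]
    simp only [gradLam, real_inner_smul_left]
    field_simp
  have hΔ : ‖zbar - z'‖ ≤ A / min lam 1 := by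
    refine norm_le_of_weighted_le hlam _ ?_ hA0
    have e := hfoc (zbar - z')
    simp only [Prod.fst_sub, Prod.snd_sub, real_inner_self_eq_norm_sq] at e ⊢
    rw [e]
    exact (le_abs_self _).trans ((fderiv ℝ φ zbar).le_of_opNorm_le (hA zbar) _)
  have hΔw : ‖zbar - z' - w‖ ≤ B * ‖zbar - z'‖ / min lam 1 := by
    refine norm_le_of_weighted_le hlam _ ?_ (by positivity)
    have e := hfoc (zbar - z' - w)
    have e' := hwc (zbar - z' - w)
    have e'' : lam * ‖(zbar - z' - w).1‖ ^ 2 + ‖(zbar - z' - w).2‖ ^ 2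
        = (fderiv ℝ φ zbar - fderiv ℝ φ z') (zbar - z' - w) := by
      rw [sub_apply, ← e, ← e', ← real_inner_self_eq_norm_sq,
        ← real_inner_self_eq_norm_sq]
      simp only [Prod.fst_sub, Prod.snd_sub, inner_sub_left]
      ring
    rw [e'']
    exact (le_abs_self _).trans (ContinuousLinearMap.le_of_opNorm_le _ (hLip zbar) _)
  -- Mean value inequality for `φ` minus its linearization, on the closed ball of radius `‖Δ‖`.
  have hT : ‖φ zbar - φ z' - fderiv ℝ φ z' (zbar - z')‖ ≤ B * ‖zbar - z'‖ * ‖zbar - z'‖ := by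
    refine (convex_closedBall z' ‖zbar - z'‖).norm_image_sub_le_of_norm_fderiv_le'
      (fun y _ => hd y) (fun y hy => ?_) (by simp) (by simp [dist_eq_norm])
    refine (hLip y).trans ?_
    rw [mem_closedBall_iff_norm] at hy
    gcongr
  have hD : ‖fderiv ℝ φ z' (zbar - z' - w)‖ ≤ A * (B * ‖zbar - z'‖ / min lam 1) :=
    ((fderiv ℝ φ z').le_of_opNorm_le (hA z') _).trans (by gcongr)
  rw [innerLam_eq_fderiv lam φ (hd z'), ← hw]
  calc |φ zbar - φ z' - fderiv ℝ φ z' w|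
      = ‖(φ zbar - φ z' - fderiv ℝ φ z' (zbar - z')) + fderiv ℝ φ z' (zbar - z' - w)‖ := by
        rw [map_sub (fderiv ℝ φ z') (zbar - z') w, Real.norm_eq_abs]
        congr 1; ring
    _ ≤ B * ‖zbar - z'‖ * ‖zbar - z'‖ + A * (B * ‖zbar - z'‖ / min lam 1) :=
        norm_add_le_of_le hT hD
    _ ≤ B * (A / min lam 1) * (A / min lam 1) + A * (B * (A / min lam 1) / min lam 1) := by
        gcongr
    _ = 2 * A ^ 2 * B / min lam 1 ^ 2 := by field_simp; ring

/-- A linear combination of `p` vectors of norm at most `K`, with coefficient vector `β`. -/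
lemma norm_sum_smul_le_card {E : Type*} [SeminormedAddCommGroup E] [NormedSpace ℝ E] {p : ℕ}
    (β : EuclideanSpace ℝ (Fin p)) {v : Fin p → E} {K : ℝ} (hv : ∀ j, ‖v j‖ ≤ K) :
    ‖∑ j, β j • v j‖ ≤ p * |K| * ‖β‖ := by
  calc ‖∑ j, β j • v j‖ ≤ ∑ _j : Fin p, ‖β‖ * |K| := by
        refine norm_sum_le_of_le _ fun j _ => ?_
        rw [norm_smul]
        gcongr
        · exact PiLp.norm_apply_le β j
        · exact (hv j).trans (le_abs_self K)
    _ = p * |K| * ‖β‖ := by simp; ring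

/-- uniform third-order estimate for the potential evaluated at a global
minimizer `z̄`:
`φ_β(z̄) = φ_β(z') + Σ_{j,k} β_jβ_k ⟨∇F_j(z'), ∇_λF_k(z')⟩ + O(‖β‖³)`. -/
theorem minimizer_potential_expansion
    (m d p : ℕ) (lam L M : ℝ) (hlam : 0 < lam)
    (F : Fin p → Zsp m d → ℝ)
    (hC2 : ∀ j, ContDiff ℝ 2 (F j))
    (hL : ∀ j z, ‖fderiv ℝ (F j) z‖ ≤ L)
    (hM : ∀ j z, ‖fderiv ℝ (fderiv ℝ (F j)) z‖ ≤ M) :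
    ∃ δ > (0 : ℝ), ∃ C ≥ (0 : ℝ), ∀ β : EuclideanSpace ℝ (Fin p), ‖β‖ ≤ δ →
      ∀ z' zbar : Zsp m d,
        (∀ z : Zsp m d,
            cost lam zbar z' - (∑ j, β j * F j zbar)
              ≤ cost lam z z' - ∑ j, β j * F j z) →
          |(∑ j, β j * F j zbar) - (∑ j, β j * F j z')
              - ∑ j, ∑ k, β j * β k * innerLam lam (F j) (F k) z'|
            ≤ C * ‖β‖ ^ 3 := by
  have hd : ∀ j, Differentiable ℝ (F j) := fun j => (hC2 j).differentiable (by norm_num)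
  have hd2 : ∀ j, Differentiable ℝ (fderiv ℝ (F j)) := fun j =>
    ((hC2 j).fderiv_right (m := 1) (by norm_num)).differentiable (by norm_num)
  have hκ : 0 < min lam 1 := lt_min hlam one_pos
  refine ⟨1, one_pos, 2 * (p * |L|) ^ 2 * (p * |M|) / min lam 1 ^ 2, by positivity, ?_⟩
  intro β _ z' zbar hmin
  have hφ : ContDiff ℝ 2 (fun z => ∑ j, β j * F j z) :=
    ContDiff.sum fun j _ => contDiff_const.mul (hC2 j)
  have hD : fderiv ℝ (fun z => ∑ j, β j * F j z) = fun z => ∑ j, β j • fderiv ℝ (F j) z :=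
    funext fun z => HasFDerivAt.fderiv <|
      HasFDerivAt.fun_sum fun j _ => ((hd j z).hasFDerivAt.const_mul (β j))
  have hD2 : ∀ z, fderiv ℝ (fun z => ∑ j, β j • fderiv ℝ (F j) z) z
      = ∑ j, β j • fderiv ℝ (fderiv ℝ (F j)) z := fun z => HasFDerivAt.fderiv <|
      HasFDerivAt.fun_sum fun j _ => ((hd2 j z).hasFDerivAt.const_smul (β j))
  have hA : ∀ z, ‖fderiv ℝ (fun z => ∑ j, β j * F j z) z‖ ≤ p * |L| * ‖β‖ := fun z => by
    rw [hD]
    exact norm_sum_smul_le_card β fun j => hL j z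
  have hB : ∀ z, ‖fderiv ℝ (fderiv ℝ (fun z => ∑ j, β j * F j z)) z‖ ≤ p * |M| * ‖β‖ := fun z => by
    rw [hD, hD2]
    exact norm_sum_smul_le_card (E := Zsp m d →L[ℝ] Zsp m d →L[ℝ] ℝ) β
      (v := fun j => fderiv ℝ (fderiv ℝ (F j)) z) fun j => hM j z
  have key := expansion_of_bounds hlam hφ hA hB hmin
  have hbil : innerLam lam (fun z => ∑ j, β j * F j z) (fun z => ∑ j, β j * F j z) z'
      = ∑ j, ∑ k, β j * β k * innerLam lam (F j) (F k) z' := by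
    rw [innerLam_sum_left lam _ _ fun j => hd j z']
    refine Finset.sum_congr rfl fun j _ => ?_
    rw [innerLam_comm, innerLam_sum_left lam _ _ fun j => hd j z', Finset.mul_sum]
    refine Finset.sum_congr rfl fun k _ => ?_
    rw [innerLam_comm, mul_assoc]
  rw [hbil] at key
  refine key.trans_eq ?_
  ring
end
end
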